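/- arXiv:2211.11877 — 4 statements merged into one kernel-verified Lean document; each statement's English description precedes it below -/
import Mathlib

section
/- Let c > 0 be a real number and n ≥ 1 an integer such that |F_{n+1} − τF_n| < c < |F_n − τF_{n−1}|. If κ, λ are natural numbers with κ + λ ≥ 1 and |κ − τλ| < c, then κ ≥ F_{n+1} and λ ≥ F_n. -/
/-!
Consecutive Fibonacci vectors `(F_{n+1}, F_n)` and `(F_n, F_{n-1})` form a basis of `ℤ²`
(`exists_fib_coords`), so `(k, l) = a (F_{n+1}, F_n) + b (F_n, F_{n-1})` with `a b : ℤ`. The form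
`(x, y) ↦ x - τ y` takes the values `ψ ^ n` and `ψ ^ (n - 1)` on this basis, `ψ` being the conjugate
of the golden mean, so the closeness hypothesis forces `|b + a ψ| < 1`. Since `-1 < ψ < 0`, this
inequality gives `b ≥ 0` when `a ≥ 1`, and then both bounds hold; it gives `b = 0` when `a = 0` and
`b ≤ 0` when `a ≤ -1`, and these are excluded because `(k, l)` is nonzero with `k ≥ 0`.
-/

open Filter

/-- The golden mean τ = (1+√5)/2. -/
noncomputable def tau : ℝ := (1 + Real.sqrt 5) / 2

/-- Two consecutive Fibonacci vectors span `ℤ²`. -/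
lemma exists_fib_coords (m : ℕ) (k l : ℤ) : ∃ a b : ℤ,
    k = a * Nat.fib (m + 2) + b * Nat.fib (m + 1) ∧ l = a * Nat.fib (m + 1) + b * Nat.fib m := by
  induction m with
  | zero => exact ⟨l, k - l, by simp, by simp⟩
  | succ m ih =>
    obtain ⟨a, b, hk, hl⟩ := ih
    refine ⟨b, a - b, ?_, ?_⟩
    · rw [hk, Nat.fib_add_two (n := m + 1)]
      push_cast
      ring
    · rw [hl, Nat.fib_add_two (n := m)]
      push_cast
      ring

/-- Lemma 5 of the paper: if |F_{n+1} − τF_n| < c < |F_n − τF_{n-1}| and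
κ, λ ∈ ℕ satisfy κ + λ ≥ 1 and |κ − τλ| < c, then κ ≥ F_{n+1} and λ ≥ F_n. -/
theorem fib_bounds_of_close_to_tau (c : ℝ) (n : ℕ) (hc : 0 < c) (hn : 1 ≤ n)
    (h₁ : |(Nat.fib (n + 1) : ℝ) - tau * Nat.fib n| < c)
    (h₂ : c < |(Nat.fib n : ℝ) - tau * Nat.fib (n - 1)|)
    (k l : ℕ) (hkl : 1 ≤ k + l) (h₃ : |(k : ℝ) - tau * l| < c) :
    Nat.fib (n + 1) ≤ k ∧ Nat.fib n ≤ l := by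
  obtain ⟨m, rfl⟩ := Nat.exists_eq_add_of_le' hn
  have htau : tau = Real.goldenRatio := by rw [tau, Real.goldenRatio]
  obtain ⟨a, b, hk, hl⟩ := exists_fib_coords m k l
  have e₁ := Real.fib_succ_sub_goldenRatio_mul_fib m
  have e₂ := Real.fib_succ_sub_goldenRatio_mul_fib (m + 1)
  have hψ₀ := Real.goldenConj_neg
  have hψ₁ := Real.neg_one_lt_goldenConj
  have hkR : (k : ℝ) = a * Nat.fib (m + 2) + b * Nat.fib (m + 1) := by exact_mod_cast hk
  have hlR : (l : ℝ) = a * Nat.fib (m + 1) + b * Nat.fib m := by exact_mod_cast hl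
  have hval : (k : ℝ) - tau * l = (b + a * Real.goldenConj) * Real.goldenConj ^ m := by
    rw [hkR, hlR, htau]
    linear_combination (a : ℝ) * e₂ + (b : ℝ) * e₁
  have hlt := h₃.trans h₂
  rw [hval, Nat.add_sub_cancel, htau, e₁, abs_mul] at hlt
  have hpos : 0 < |Real.goldenConj ^ m| := abs_pos.2 (pow_ne_zero _ Real.goldenConj_ne_zero)
  have hab : |(b : ℝ) + a * Real.goldenConj| < 1 := by
    by_contra! h
    nlinarith
  obtain ⟨hab₁, hab₂⟩ := abs_lt.1 hab
  have f₁ : (0 : ℤ) < Nat.fib (m + 1) := by exact_mod_cast Nat.fib_pos.2 (by omega)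
  have f₂ : (0 : ℤ) < Nat.fib (m + 2) := by exact_mod_cast Nat.fib_pos.2 (by omega)
  have f₀ : (0 : ℤ) ≤ Nat.fib m := by positivity
  rcases lt_trichotomy a 0 with ha | rfl | ha
  · exfalso
    have haR : (a : ℝ) < 0 := by exact_mod_cast ha
    have hb : b < 1 := by
      have : (b : ℝ) < 1 := by nlinarith
      exact_mod_cast this
    have hk₀ : (0 : ℤ) ≤ k := by positivity
    nlinarith
  · exfalso
    have hb₁ : -1 < b := by
      have : (-1 : ℝ) < b := by simpa using hab₁
      exact_mod_cast this
    have hb₂ : b < 1 := by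
      have : (b : ℝ) < 1 := by simpa using hab₂
      exact_mod_cast this
    obtain rfl : b = 0 := by omega
    simp only [zero_mul, add_zero] at hk hl
    omega
  · have haR : (0 : ℝ) < a := by exact_mod_cast ha
    have hb : -1 < b := by
      have : (-1 : ℝ) < b := by nlinarith
      exact_mod_cast this
    constructor
    · zify
      rw [hk]
      nlinarith
    · zify
      rw [hl]
      nlinarith
end

section
/- For natural numbers k and ℓ, the pair (k, ℓ) is the Parikh vector of some factor of the Fibonacci word f if and only if |k − τℓ| < τ². -/
/-!
Write `δ(w) = |w|_a - τ |w|_b` for a finite word `w` (`disc` below). The vector `(1, -τ)` is an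
eigenvector of the incidence matrix of `φ`, so `δ(φ(w)) = -δ(w)/τ`. Every prefix of `φ(w)` is `φ(q)`
or `φ(q)a` for some prefix `q` of `w`; since `-1 < δ(q) < τ` gives `-1 < δ(φ(q)) < 1/τ` and
`0 < δ(φ(q)a) < 1 + 1/τ = τ`, all prefixes of the Fibonacci word have `δ` in the open interval
`(-1, τ)`, whose width is `τ²` (`disc_prefix_fibWord`). A factor is the difference of two prefixes,
hence `|δ| < τ²`.

Conversely, let `|k - τℓ| < τ²` and `n = k + ℓ > 0`. A factor of length `n` with `m` letters `b` has
`δ = n - τ² m`. This is nonzero for `m = ℓ` because `τ` is irrational. If no factor of length `n`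
has exactly `ℓ` letters `b`, then all their values of `δ` lie on one side of zero, bounded away from
it by a constant. Cutting the prefix of length `jn` into `j` blocks of length `n` shows that its `δ`
grows at least linearly in `j` in absolute value, against the boundedness on prefixes
(`exists_disc_gt`, `exists_disc_lt`).
-/

open Filter

/-- The Fibonacci morphism φ on the alphabet {a, b}; we encode a = `false`, b = `true`,
so φ(a) = ab and φ(b) = a. -/
def phi : Bool → List Bool
  | false => [false, true]
  | true  => [false]

/-- Application of the morphism φ to a finite word. -/
def phiW (w : List Bool) : List Bool := w.flatMap phi

/-- φⁿ(a). -/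
def phiIter (n : ℕ) : List Bool := phiW^[n] [false]

/-- The Fibonacci word, i.e. the fixed point of φ beginning with a (= `false`):
the unique sequence having φⁿ(a) as a prefix for every n. -/
def fibWord (i : ℕ) : Bool := (phiIter (i + 1)).getD i false

/-- The factor of the sequence `u` of length `n` occurring at index `i`. -/
def factorAt {α : Type*} (u : ℕ → α) (i n : ℕ) : List α :=
  (List.range n).map fun k => u (i + k)

/-- The finite word `w` occurs in the sequence `u` at index `i`. -/
def OccursAt {α : Type*} (u : ℕ → α) (w : List α) (i : ℕ) : Prop :=
  factorAt u i w.length = w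

/-- `w` is a factor of the sequence `u`. -/
def IsFactor {α : Type*} (u : ℕ → α) (w : List α) : Prop :=
  ∃ i, OccursAt u w i

lemma tau_sq : tau ^ 2 = tau + 1 := Real.goldenRatio_sq

lemma one_lt_tau : 1 < tau := Real.one_lt_goldenRatio

/-- The discrepancy `δ(w) = |w|_a - τ |w|_b` of a finite word. -/
noncomputable def disc (w : List Bool) : ℝ := (w.count false : ℝ) - tau * w.count true

lemma disc_append (u v : List Bool) : disc (u ++ v) = disc u + disc v := by
  simp only [disc, List.count_append]
  push_cast
  ring

lemma disc_phiW (w : List Bool) : tau * disc (phiW w) = -disc w := by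
  induction w with
  | nil => simp [disc, phiW]
  | cons x w ih =>
    have h : phiW (x :: w) = phi x ++ phiW w := by simp [phiW]
    have h2 : disc (x :: w) = disc [x] + disc w := disc_append [x] w
    rw [h, h2, disc_append, mul_add, ih]
    cases x
    · simp [disc, phi]
      linarith [tau_sq]
    · simp [disc, phi]
      ring

lemma prefix_phiW {w p : List Bool} (h : p <+: phiW w) :
    ∃ q, q <+: w ∧ (p = phiW q ∨ p = phiW q ++ [false]) := by
  induction w generalizing p with
  | nil => exact ⟨[], List.nil_prefix, Or.inl (by simpa [phiW] using h)⟩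
  | cons x w ih =>
    have hx : ∀ v, phiW (x :: v) = phi x ++ phiW v := fun v => by simp [phiW]
    rw [hx] at h
    have key : ∀ p', p' <+: phiW w → p = phi x ++ p' →
        ∃ q, q <+: x :: w ∧ (p = phiW q ∨ p = phiW q ++ [false]) := by
      rintro p' hp' rfl
      obtain ⟨q, hq, hq'⟩ := ih hp'
      refine ⟨x :: q, by simpa using hq, ?_⟩
      rcases hq' with rfl | rfl
      · exact Or.inl (hx q).symm
      · exact Or.inr (by rw [hx, List.append_assoc])
    rcases p with _ | ⟨y, p⟩
    · exact ⟨[], List.nil_prefix, Or.inl (by simp [phiW])⟩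
    cases x
    · simp only [phi, List.cons_append, List.nil_append, List.cons_prefix_cons] at h
      obtain ⟨rfl, h⟩ := h
      rcases p with _ | ⟨z, p⟩
      · exact ⟨[], List.nil_prefix, Or.inr (by simp [phiW])⟩
      rw [List.cons_prefix_cons] at h
      obtain ⟨rfl, h⟩ := h
      exact key p h rfl
    · simp only [phi, List.cons_append, List.nil_append, List.cons_prefix_cons] at h
      obtain ⟨rfl, h⟩ := h
      exact key p h rfl

lemma phiIter_succ (n : ℕ) : phiIter (n + 1) = phiW (phiIter n) :=
  Function.iterate_succ_apply' _ _ _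

lemma disc_prefix_phiIter (n : ℕ) {p : List Bool} (h : p <+: phiIter n) :
    -1 < disc p ∧ disc p < tau := by
  have ht := one_lt_tau
  have h2 := tau_sq
  induction n generalizing p with
  | zero =>
    have h' : p <+: [false] := h
    rcases p with _ | ⟨y, p⟩
    · simp [disc]
      linarith
    · rw [List.cons_prefix_cons, List.prefix_nil] at h'
      obtain ⟨rfl, rfl⟩ := h'
      have h1 : disc [false] = 1 := by simp [disc]
      rw [h1]
      exact ⟨by linarith, ht⟩
  | succ n ih =>
    rw [phiIter_succ] at h
    obtain ⟨q, hq, hp⟩ := prefix_phiW h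
    obtain ⟨h3, h4⟩ := ih hq
    have h5 := disc_phiW q
    have h6 : disc [false] = 1 := by simp [disc]
    rcases hp with rfl | rfl
    · constructor <;> nlinarith
    · rw [disc_append, h6]
      constructor <;> nlinarith

lemma phiIter_prefix_succ (n : ℕ) : phiIter n <+: phiIter (n + 1) := by
  induction n with
  | zero => exact ⟨[true], rfl⟩
  | succ n ih =>
    obtain ⟨t, ht⟩ := ih
    refine ⟨phiW t, ?_⟩
    rw [phiIter_succ (n + 1), ← ht]
    simp only [phiW, List.flatMap_append]
    rw [ht, phiIter_succ n]
    rfl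

lemma phiIter_prefix {m n : ℕ} (h : m ≤ n) : phiIter m <+: phiIter n := by
  induction n, h using Nat.le_induction with
  | base => exact List.prefix_rfl
  | succ n _ ih => exact ih.trans (phiIter_prefix_succ n)

lemma length_phiW (w : List Bool) : (phiW w).length = w.length + w.count false := by
  induction w with
  | nil => simp [phiW]
  | cons x w ih =>
    have h : phiW (x :: w) = phi x ++ phiW w := by simp [phiW]
    cases x <;> simp [h, phi, ih] <;> omega

lemma lt_length_phiIter (n : ℕ) : n < (phiIter n).length := by
  induction n with
  | zero => simp [phiIter]
  | succ n ih =>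
    have h : 1 ≤ (phiIter n).count false :=
      (phiIter_prefix (Nat.zero_le n)).sublist.count_le false
    rw [phiIter_succ, length_phiW]
    omega

lemma factorAt_zero_prefix (n : ℕ) : factorAt fibWord 0 n <+: phiIter n := by
  have hn := lt_length_phiIter n
  rw [List.prefix_iff_eq_take]
  apply List.ext_getElem
  · simp [factorAt]
    omega
  · intro i h1 h2
    have hi : i < n := by simpa [factorAt] using h1
    have h3 := lt_length_phiIter (i + 1)
    have h4 : i < (phiIter (i + 1)).length := by omega
    have h5 := (phiIter_prefix (show i + 1 ≤ n from hi)).getElem h4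
    simp only [factorAt, fibWord, List.getElem_map, List.getElem_range, List.getElem_take, zero_add]
    rw [List.getD_eq_getElem _ _ h4, h5]

lemma disc_prefix_fibWord (n : ℕ) :
    -1 < disc (factorAt fibWord 0 n) ∧ disc (factorAt fibWord 0 n) < tau :=
  disc_prefix_phiIter n (factorAt_zero_prefix n)

lemma factorAt_add {α : Type*} (u : ℕ → α) (i n : ℕ) :
    factorAt u 0 (i + n) = factorAt u 0 i ++ factorAt u i n := by
  simp [factorAt, List.range_add, Function.comp_def]

lemma disc_factorAt_add (i n : ℕ) : disc (factorAt fibWord 0 (i + n)) =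
    disc (factorAt fibWord 0 i) + disc (factorAt fibWord i n) := by
  rw [factorAt_add, disc_append]

lemma isFactor_factorAt {α : Type*} (u : ℕ → α) (i n : ℕ) : IsFactor u (factorAt u i n) :=
  ⟨i, by simp [OccursAt, factorAt]⟩

/-- The discrepancies of the factors of a fixed length are not bounded above by a negative
constant. -/
lemma exists_disc_gt (n : ℕ) {c : ℝ} (hc : 0 < c) : ∃ i, -c < disc (factorAt fibWord i n) := by
  by_contra! h
  have hj : ∀ j : ℕ, disc (factorAt fibWord 0 (j * n)) ≤ -(j * c) := by
    intro j
    induction j with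
    | zero => simp [factorAt, disc]
    | succ j ih =>
      rw [Nat.succ_mul, disc_factorAt_add]
      push_cast
      linarith [h (j * n)]
  obtain ⟨j, hj'⟩ := exists_nat_gt (1 / c)
  rw [div_lt_iff₀ hc] at hj'
  linarith [hj j, (disc_prefix_fibWord (j * n)).1]

/-- The discrepancies of the factors of a fixed length are not bounded below by a positive
constant. -/
lemma exists_disc_lt (n : ℕ) {c : ℝ} (hc : 0 < c) : ∃ i, disc (factorAt fibWord i n) < c := by
  by_contra! h
  have hj : ∀ j : ℕ, j * c ≤ disc (factorAt fibWord 0 (j * n)) := by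
    intro j
    induction j with
    | zero => simp [factorAt, disc]
    | succ j ih =>
      rw [Nat.succ_mul, disc_factorAt_add]
      push_cast
      linarith [h (j * n)]
  obtain ⟨j, hj'⟩ := exists_nat_gt (tau / c)
  rw [div_lt_iff₀ hc] at hj'
  linarith [hj j, (disc_prefix_fibWord (j * n)).2]

lemma abs_disc_factorAt_lt (i n : ℕ) : |disc (factorAt fibWord i n)| < tau ^ 2 := by
  have h1 := disc_prefix_fibWord i
  have h2 := disc_prefix_fibWord (i + n)
  rw [disc_factorAt_add] at h2
  rw [tau_sq, abs_lt]
  constructor <;> linarith [h1.1, h1.2, h2.1, h2.2]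

lemma disc_eq (w : List Bool) : disc w = w.length - tau ^ 2 * w.count true := by
  have h : (w.count false : ℝ) + w.count true = w.length := by
    exact_mod_cast List.count_false_add_count_true w
  rw [disc, tau_sq]
  linarith

/-- (k, ℓ) is the Parikh vector of a factor of the Fibonacci word
if and only if |k − τℓ| < τ². -/
theorem parikh_vector_of_factor_iff (k l : ℕ) :
    (∃ w : List Bool, IsFactor fibWord w ∧ w.count false = k ∧ w.count true = l) ↔
      |(k : ℝ) - tau * l| < tau ^ 2 := by
  constructor
  · rintro ⟨w, ⟨i, hi⟩, rfl, rfl⟩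
    have h := abs_disc_factorAt_lt i w.length
    rw [hi] at h
    exact h
  · intro h
    have ht := tau_sq
    have ht1 := one_lt_tau
    rcases Nat.eq_zero_or_pos (k + l) with h0 | h0
    · exact ⟨[], ⟨0, rfl⟩, by simp; omega, by simp; omega⟩
    by_contra hno
    have hlen : ∀ i, (factorAt fibWord i (k + l)).length = k + l := fun i => by simp [factorAt]
    have hne : ∀ i, (factorAt fibWord i (k + l)).count true ≠ l := by
      intro i hi
      have h1 := List.count_false_add_count_true (factorAt fibWord i (k + l))
      rw [hlen, hi] at h1
      exact hno ⟨_, isFactor_factorAt _ i (k + l), by omega, hi⟩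
    have hd : ∀ i, disc (factorAt fibWord i (k + l)) =
        (k + l : ℝ) - tau ^ 2 * (factorAt fibWord i (k + l)).count true := by
      intro i
      rw [disc_eq, hlen]
      push_cast
      rfl
    have hz : (k : ℝ) - tau * l ≠ 0 := by
      intro h1
      rcases Nat.eq_zero_or_pos l with rfl | hl
      · have : (k : ℝ) = 0 := by simpa using h1
        have : k = 0 := by exact_mod_cast this
        omega
      · have hirr : Irrational (tau * l) :=
          Irrational.mul_natCast Real.goldenRatio_irrational hl.ne'
        exact hirr.ne_nat k (by linarith)
    rw [abs_lt] at h
    rcases lt_or_gt_of_ne hz with hneg | hpos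
    · -- `c` is the discrepancy for the count `l - 1`; it is positive, so some factor of length
      -- `k + l` has more than `l - 1` letters `b`, and the bound `-τ²` forces at most `l`.
      obtain ⟨i, hi⟩ := exists_disc_lt (k + l)
        (c := (k : ℝ) - tau * l + tau ^ 2) (by linarith)
      have hb := (abs_lt.1 (abs_disc_factorAt_lt i (k + l))).1
      rw [hd] at hi hb
      apply hne i
      generalize (factorAt fibWord i (k + l)).count true = m at *
      have h1 : (l : ℝ) - 1 < m := by nlinarith
      have h2 : (m : ℝ) < l + 1 := by nlinarith
      have h3 : l < m + 1 := by exact_mod_cast (by linarith : (l : ℝ) < m + 1)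
      have h4 : m < l + 1 := by exact_mod_cast h2
      omega
    · -- `-c` is the discrepancy for the count `l + 1`; it is negative, so some factor of length
      -- `k + l` has fewer than `l + 1` letters `b`, and the bound `τ²` forces at least `l`.
      obtain ⟨i, hi⟩ := exists_disc_gt (k + l)
        (c := tau ^ 2 - ((k : ℝ) - tau * l)) (by linarith)
      have hb := (abs_lt.1 (abs_disc_factorAt_lt i (k + l))).2
      rw [hd] at hi hb
      apply hne i
      generalize (factorAt fibWord i (k + l)).count true = m at *
      have h1 : (l : ℝ) - 1 < m := by nlinarith
      have h2 : (m : ℝ) < l + 1 := by nlinarith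
      have h3 : l < m + 1 := by exact_mod_cast (by linarith : (l : ℝ) < m + 1)
      have h4 : m < l + 1 := by exact_mod_cast h2
      omega
end

section
/- Every nonempty factor of the Fibonacci word f has exactly two return words in f, i.e., for every nonempty factor w of f the set of words arising as return words to w in f has exactly two elements. -/
/-!
The Fibonacci word satisfies `φ(f) = f`, so `f` is cut into the blocks `φ(f n)`; write `blockPos n`
for the position where the `n`-th block begins. The letter `a` occurs exactly at the positions
`blockPos n` (`fibWord_blockPos`, `exists_blockPos`), and `f (blockPos n + 1)` is the complement of
`f n`, hence determines the block.

The return words to `w` depend only on the set of occurrences of `w`, so everything is phrased for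
sets of positions (`IsReturn`, `TwoReturns`). The whole of `ℕ`, the occurrence set of the empty
word, has the two returns `a` and `b`. Two operations preserve the number of returns:

* applying `blockPos` to the set, which applies the injective map `φ` to the returns
  (`TwoReturns.image_blockPos`);
* shifting by one a set on which `f` takes the value `a`, which conjugates each return cyclically
  (`TwoReturns.image_succ`).

Let `w` be the factor occupying the positions `i, …, e - 1`, nonempty. If `w` begins with `b` then it
is always preceded by `a`, and if it ends with `b` it is always followed by `a`; adding these letters
changes the occurrences at most by a shift. Once `w` begins and ends with `a`, it is `φ(w') a` for a
factor `w'` occupying the positions `m, …, e' - 1`, and the occurrences of `w` are the images of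
those of `w'` under `blockPos` (`occ_blockPos`). As `blockPos x > x` for `x > 0`, one has `e' < e`,
and strong induction on the end `e` finishes the proof.
-/

open Filter

/-- `v` is the return word to `w` in `u` occurring at index `i`: `i` and `j = i + |v|`
are consecutive occurrences of `w` in `u`, and `v = u_i u_{i+1} ⋯ u_{j-1}`. -/
def IsReturnWordAt {α : Type*} (u : ℕ → α) (w v : List α) (i : ℕ) : Prop :=
  ∃ j, i < j ∧ OccursAt u w i ∧ OccursAt u w j ∧
    (∀ m, i < m → m < j → ¬ OccursAt u w m) ∧ v = factorAt u i (j - i)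

/-- `v` is a return word to `w` in `u`. -/
def IsReturnWord {α : Type*} (u : ℕ → α) (w v : List α) : Prop :=
  ∃ i, IsReturnWordAt u w v i

/-! ### The fixed point property -/

lemma phiW_append (u v : List Bool) : phiW (u ++ v) = phiW u ++ phiW v := by
  simp [phiW]

lemma length_le_phiW (w : List Bool) : w.length ≤ (phiW w).length := by
  induction w with
  | nil => simp
  | cons c w ih =>
    cases c <;> simp [phiW, phi] at ih ⊢ <;> omega

lemma fibWord_eq_of_getElem? {k i : ℕ} {x : Bool} (h : (phiIter k)[i]? = some x) :
    fibWord i = x := by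
  have hi : i < (phiIter (i + 1)).length := (Nat.lt_succ_self i).trans (lt_length_phiIter _)
  have h1 : (phiIter (i + 1))[i]? = some (fibWord i) := by
    rw [fibWord, List.getD_eq_getElem?_getD, List.getElem?_eq_getElem hi]; rfl
  -- both prefixes extend to the longer of the two
  have key : ∀ {l : ℕ} {y : Bool}, l ≤ max k (i + 1) → (phiIter l)[i]? = some y →
      (phiIter (max k (i + 1)))[i]? = some y := by
    intro l y hl hy
    obtain ⟨t, ht⟩ := phiIter_prefix hl
    rw [← ht, List.getElem?_append_left (List.getElem?_eq_some_iff.1 hy).1, hy]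
  have := (key (le_max_right _ _) h1).symm.trans (key (le_max_left _ _) h)
  exact Option.some.inj this

lemma getElem?_phiIter {k i : ℕ} (h : i < (phiIter k).length) :
    (phiIter k)[i]? = some (fibWord i) := by
  have := List.getElem?_eq_getElem h
  rw [this, fibWord_eq_of_getElem? this]

/-- The position in `f = φ(f)` at which the `n`-th block `φ(f n)` begins. -/
def blockPos : ℕ → ℕ
  | 0 => 0
  | n + 1 => blockPos n + (phi (fibWord n)).length

lemma length_phiW_take {k n : ℕ} (h : n ≤ (phiIter k).length) :
    (phiW ((phiIter k).take n)).length = blockPos n := by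
  induction n with
  | zero => simp [phiW, blockPos]
  | succ n ih =>
    rw [List.take_add_one, getElem?_phiIter (by omega), phiW_append, List.length_append,
      ih (by omega), blockPos]
    simp [phiW]

/-- The fixed point property `φ(f) = f`, read inside the `n`-th block. -/
lemma fibWord_block {n r : ℕ} {x : Bool} (h : (phi (fibWord n))[r]? = some x) :
    fibWord (blockPos n + r) = x := by
  have hn := lt_length_phiIter n
  apply fibWord_eq_of_getElem? (k := n + 1)
  have hsplit : phiIter n = (phiIter n).take n ++ fibWord n :: (phiIter n).drop (n + 1) := by
    have h1 := getElem?_phiIter hn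
    rw [List.getElem?_eq_getElem hn] at h1
    rw [← Option.some.inj h1, List.cons_getElem_drop_succ, List.take_append_drop]
  have hl := length_phiW_take hn.le
  rw [phiIter_succ, hsplit, phiW_append, List.getElem?_append_right (by omega), hl,
    Nat.add_sub_cancel_left]
  have : phiW (fibWord n :: (phiIter n).drop (n + 1))
      = phi (fibWord n) ++ phiW ((phiIter n).drop (n + 1)) := by simp [phiW]
  rw [this, List.getElem?_append_left (List.getElem?_eq_some_iff.1 h).1, h]

/-! ### Blocks -/

lemma blockPos_succ_of_false {n : ℕ} (h : fibWord n = false) :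
    blockPos (n + 1) = blockPos n + 2 := by simp [blockPos, h, phi]

lemma blockPos_succ_of_true {n : ℕ} (h : fibWord n = true) :
    blockPos (n + 1) = blockPos n + 1 := by simp [blockPos, h, phi]

lemma fibWord_blockPos (n : ℕ) : fibWord (blockPos n) = false :=
  fibWord_block (r := 0) (by cases fibWord n <;> rfl)

lemma fibWord_blockPos_add_one (n : ℕ) : fibWord (blockPos n + 1) = !fibWord n := by
  cases h : fibWord n
  · exact fibWord_block (r := 1) (by rw [h]; rfl)
  · rw [← blockPos_succ_of_true h, fibWord_blockPos]; rfl

lemma blockPos_strictMono : StrictMono blockPos := by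
  refine strictMono_nat_of_lt_succ fun n => ?_
  cases h : fibWord n
  · rw [blockPos_succ_of_false h]; omega
  · rw [blockPos_succ_of_true h]; omega

lemma fibWord_zero : fibWord 0 = false := fibWord_blockPos 0

lemma fibWord_one : fibWord 1 = true := by
  have := fibWord_blockPos_add_one 0
  rwa [fibWord_zero] at this

lemma lt_blockPos {n : ℕ} (h : 0 < n) : n < blockPos n := by
  induction n, h using Nat.le_induction with
  | base => rw [blockPos_succ_of_false fibWord_zero]; omega
  | succ n _ ih =>
    have : blockPos n < blockPos (n + 1) := blockPos_strictMono (Nat.lt_succ_self n)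
    omega

lemma exists_blockPos_or (i : ℕ) :
    ∃ n, i = blockPos n ∨ (fibWord n = false ∧ i = blockPos n + 1) := by
  induction i with
  | zero => exact ⟨0, Or.inl rfl⟩
  | succ i ih =>
    obtain ⟨n, rfl | ⟨h, rfl⟩⟩ := ih
    · cases h : fibWord n
      · exact ⟨n, Or.inr ⟨h, rfl⟩⟩
      · exact ⟨n + 1, Or.inl (blockPos_succ_of_true h).symm⟩
    · exact ⟨n + 1, Or.inl (blockPos_succ_of_false h).symm⟩

lemma exists_blockPos {i : ℕ} (h : fibWord i = false) : ∃ n, i = blockPos n := by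
  obtain ⟨n, h1 | ⟨h1, rfl⟩⟩ := exists_blockPos_or i
  · exact ⟨n, h1⟩
  · rw [fibWord_blockPos_add_one, h1] at h; simp at h

/-- Each `b` is surrounded by two letters `a`. -/
lemma fibWord_around_true {i : ℕ} (h : fibWord i = true) :
    (∃ k, i = k + 1 ∧ fibWord k = false) ∧ fibWord (i + 1) = false := by
  obtain ⟨n, rfl | ⟨h1, rfl⟩⟩ := exists_blockPos_or i
  · rw [fibWord_blockPos] at h; simp at h
  · refine ⟨⟨_, rfl, fibWord_blockPos n⟩, ?_⟩
    have := fibWord_blockPos (n + 1)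
    rwa [blockPos_succ_of_false h1] at this

/-! ### Returns to a set of positions -/

/-- `v` is the block of `f` between two consecutive elements of the set `S` of positions. -/
def IsReturn (S : Set ℕ) (v : List Bool) : Prop :=
  ∃ i j, i < j ∧ i ∈ S ∧ j ∈ S ∧ (∀ m, i < m → m < j → m ∉ S) ∧ v = factorAt fibWord i (j - i)

/-- The set `S` of positions has exactly two returns. -/
def TwoReturns (S : Set ℕ) : Prop :=
  ∃ v₁ v₂ : List Bool, v₁ ≠ v₂ ∧ ∀ v, IsReturn S v ↔ (v = v₁ ∨ v = v₂)

lemma factorAt_succ (i n : ℕ) :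
    factorAt fibWord i (n + 1) = factorAt fibWord i n ++ [fibWord (i + n)] := by
  simp [factorAt, List.range_succ]

lemma factorAt_succ' (i n : ℕ) :
    factorAt fibWord i (n + 1) = fibWord i :: factorAt fibWord (i + 1) n := by
  simp [factorAt, List.range_succ_eq_map, Function.comp_def, Nat.add_right_comm i 1, ← add_assoc]

lemma twoReturns_univ : TwoReturns Set.univ := by
  have key : ∀ v, IsReturn Set.univ v ↔ ∃ i, v = [fibWord i] := by
    intro v
    constructor
    · rintro ⟨i, j, hij, -, -, hm, rfl⟩
      have : j = i + 1 := by
        by_contra hne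
        exact hm (i + 1) (by omega) (by omega) trivial
      subst this
      exact ⟨i, by simp [factorAt]⟩
    · rintro ⟨i, rfl⟩
      exact ⟨i, i + 1, by omega, trivial, trivial, fun m h1 h2 => by omega, by simp [factorAt]⟩
  refine ⟨[false], [true], by simp, fun v => (key v).trans ⟨?_, ?_⟩⟩
  · rintro ⟨i, rfl⟩
    cases fibWord i <;> simp
  · rintro (rfl | rfl)
    · exact ⟨0, by rw [fibWord_zero]⟩
    · exact ⟨1, by rw [fibWord_one]⟩

/-- A strictly increasing map of positions that acts on the returns by an injective map of words
preserves the number of returns. -/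
lemma TwoReturns.image {S : Set ℕ} (hS : TwoReturns S) {p : ℕ → ℕ} (hp : StrictMono p)
    {g : List Bool → List Bool} (hg : Function.Injective g)
    (hpg : ∀ i ∈ S, ∀ j ∈ S, i < j →
      factorAt fibWord (p i) (p j - p i) = g (factorAt fibWord i (j - i))) :
    TwoReturns (p '' S) := by
  obtain ⟨v₁, v₂, hne, h⟩ := hS
  have key : ∀ v, IsReturn (p '' S) v ↔ ∃ u, IsReturn S u ∧ v = g u := by
    intro v
    constructor
    · rintro ⟨_, _, hij, ⟨i, hi, rfl⟩, ⟨j, hj, rfl⟩, hm, rfl⟩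
      have hij' := hp.lt_iff_lt.1 hij
      exact ⟨_, ⟨i, j, hij', hi, hj,
        fun m h1 h2 hmS => hm (p m) (hp h1) (hp h2) ⟨m, hmS, rfl⟩, rfl⟩, hpg i hi j hj hij'⟩
    · rintro ⟨_, ⟨i, j, hij, hi, hj, hm, rfl⟩, rfl⟩
      refine ⟨p i, p j, hp hij, ⟨i, hi, rfl⟩, ⟨j, hj, rfl⟩, ?_, (hpg i hi j hj hij).symm⟩
      rintro _ h1 h2 ⟨m, hmS, rfl⟩
      exact hm m (hp.lt_iff_lt.1 h1) (hp.lt_iff_lt.1 h2) hmS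
  refine ⟨g v₁, g v₂, fun e => hne (hg e), fun v => (key v).trans ?_⟩
  constructor
  · rintro ⟨u, hu, rfl⟩
    exact ((h u).1 hu).imp (congrArg g) (congrArg g)
  · rintro (rfl | rfl)
    · exact ⟨v₁, (h _).2 (Or.inl rfl), rfl⟩
    · exact ⟨v₂, (h _).2 (Or.inr rfl), rfl⟩

lemma phiW_injective : Function.Injective phiW := by
  -- a nonempty image under `φ` never begins with `b`, so the first block can be read off
  have hd : ∀ u t, phiW u ≠ true :: t := by
    intro u t
    rcases u with _ | ⟨_ | _, u⟩ <;> simp [phiW, phi]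
  intro u
  induction u with
  | nil => intro v h; rcases v with _ | ⟨_ | _, v⟩ <;> simp [phiW, phi] at h ⊢
  | cons c u ih =>
    have e0 : ∀ x, phiW (false :: x) = false :: true :: phiW x := fun x => by simp [phiW, phi]
    have e1 : ∀ x, phiW (true :: x) = false :: phiW x := fun x => by simp [phiW, phi]
    intro v h
    rcases v with _ | ⟨d, v⟩
    · cases c <;> simp [phiW, phi] at h
    · cases c <;> cases d <;> simp only [e0, e1, List.cons.injEq, true_and] at h
      · rw [ih h]
      · exact absurd h.symm (hd _ _)
      · exact absurd h (hd _ _)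
      · rw [ih h]

lemma factorAt_blockPos (i n : ℕ) :
    factorAt fibWord (blockPos i) (blockPos (i + n) - blockPos i)
      = phiW (factorAt fibWord i n) := by
  induction n with
  | zero => simp [factorAt, phiW]
  | succ n ih =>
    have hle : blockPos i ≤ blockPos (i + n) := blockPos_strictMono.monotone (by omega)
    have h0 := fibWord_blockPos (i + n)
    have h1 := fibWord_blockPos_add_one (i + n)
    obtain ⟨d, hd⟩ := Nat.exists_eq_add_of_le hle
    rw [factorAt_succ, phiW_append, ← ih, ← add_assoc]
    cases h : fibWord (i + n)
    · have e : blockPos (i + n + 1) - blockPos i = d + 1 + 1 := by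
        rw [blockPos_succ_of_false h]; omega
      have e' : blockPos (i + n) - blockPos i = d := by omega
      rw [h, hd] at h1
      rw [hd] at h0
      rw [e, e', factorAt_succ, factorAt_succ, h0, ← add_assoc, h1]
      simp [phiW, phi]
    · have e : blockPos (i + n + 1) - blockPos i = d + 1 := by
        rw [blockPos_succ_of_true h]; omega
      have e' : blockPos (i + n) - blockPos i = d := by omega
      rw [hd] at h0
      rw [e, e', factorAt_succ, h0]
      simp [phiW, phi]

lemma TwoReturns.image_blockPos {S : Set ℕ} (hS : TwoReturns S) : TwoReturns (blockPos '' S) := by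
  refine hS.image blockPos_strictMono phiW_injective fun i _ j _ hij => ?_
  obtain ⟨n, rfl⟩ := Nat.exists_eq_add_of_le hij.le
  rw [factorAt_blockPos, Nat.add_sub_cancel_left]

lemma TwoReturns.image_succ {S : Set ℕ} (hS : TwoReturns S) (hf : ∀ i ∈ S, fibWord i = false) :
    TwoReturns ((· + 1) '' S) := by
  refine hS.image (fun _ _ h => Nat.add_lt_add_right h 1) (List.rotate_injective 1)
    fun i hi j hj hij => ?_
  obtain ⟨n, rfl⟩ := Nat.exists_eq_add_of_lt hij
  have e1 : i + n + 1 + 1 - (i + 1) = n + 1 := by omega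
  have e2 : i + n + 1 - i = n + 1 := by omega
  rw [e1, e2, factorAt_succ, factorAt_succ', List.rotate_cons_succ, List.rotate_zero, hf i hi,
    show i + 1 + n = i + n + 1 by omega, hf _ hj]

/-! ### Occurrence sets -/

/-- The set of occurrences of the factor of length `n` occurring at `i`. -/
def occ (i n : ℕ) : Set ℕ := {k | ∀ r < n, fibWord (k + r) = fibWord (i + r)}

lemma occ_zero (i : ℕ) : occ i 0 = Set.univ := by simp [occ]

/-- A factor ending with `b` is always followed by `a`. -/
lemma occ_succ_right {i n : ℕ} (h : fibWord (i + n) = true) : occ i (n + 1) = occ i (n + 2) := by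
  ext k
  refine ⟨fun hk r hr => ?_, fun hk r hr => hk r (by omega)⟩
  rcases Nat.lt_succ_iff_lt_or_eq.1 hr with hr' | rfl
  · exact hk r hr'
  · have h1 := hk n (by omega)
    have h2 := (fibWord_around_true h).2
    have h3 := (fibWord_around_true (h1.trans h)).2
    rw [← add_assoc, ← add_assoc, h2, h3]

/-- A factor beginning with `b` is always preceded by `a`. -/
lemma occ_succ_left {i n : ℕ} (h : fibWord (i + 1) = true) :
    occ (i + 1) (n + 1) = (· + 1) '' occ i (n + 2) := by
  have hi : fibWord i = false := by
    obtain ⟨⟨k, hk, hk'⟩, -⟩ := fibWord_around_true h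
    obtain rfl : i = k := by omega
    exact hk'
  ext k
  constructor
  · intro hk
    have h0 : fibWord k = true := (hk 0 (by omega)).trans h
    obtain ⟨⟨k, rfl, hk'⟩, -⟩ := fibWord_around_true h0
    refine ⟨k, fun r hr => ?_, rfl⟩
    rcases r with _ | r
    · rw [add_zero, add_zero, hk', hi]
    · have := hk r (by omega)
      rwa [add_assoc, add_assoc, add_comm 1] at this
  · rintro ⟨k, hk, rfl⟩ r hr
    have := hk (r + 1) (by omega)
    rwa [add_comm r, ← add_assoc, ← add_assoc] at this

/-- The occurrences of `φ(w') a` are the images under `blockPos` of those of `w'`; here `w'` is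
the factor of length `l` at `m`. -/
lemma occ_blockPos (m l : ℕ) :
    occ (blockPos m) (blockPos (m + l) - blockPos m + 1) = blockPos '' occ m l := by
  ext k
  constructor
  · intro hk
    have h0 : fibWord k = false := (hk 0 (by omega)).trans (fibWord_blockPos m)
    obtain ⟨k, rfl⟩ := exists_blockPos h0
    refine ⟨k, ?_, rfl⟩
    -- decode block by block, keeping the two block decompositions aligned
    have key : ∀ s ≤ l, blockPos (k + s) + blockPos m = blockPos (m + s) + blockPos k ∧
        ∀ r < s, fibWord (k + r) = fibWord (m + r) := by
      intro s
      induction s with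
      | zero => intro _; exact ⟨add_comm _ _, fun r hr => by omega⟩
      | succ s ih =>
        intro hs
        obtain ⟨h1, h2⟩ := ih (by omega)
        have ha : blockPos m ≤ blockPos (m + s) := blockPos_strictMono.monotone (by omega)
        have hb : blockPos (m + s) < blockPos (m + l) := blockPos_strictMono (by omega)
        have h3 := hk (blockPos (m + s) - blockPos m + 1) (by omega)
        rw [show blockPos k + (blockPos (m + s) - blockPos m + 1) = blockPos (k + s) + 1 by omega,
          show blockPos m + (blockPos (m + s) - blockPos m + 1) = blockPos (m + s) + 1 by omega,
          fibWord_blockPos_add_one, fibWord_blockPos_add_one] at h3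
        have h4 : fibWord (k + s) = fibWord (m + s) := Bool.not_inj h3
        constructor
        · rw [← add_assoc, ← add_assoc, blockPos, blockPos, h4]; omega
        · intro r hr
          rcases Nat.lt_succ_iff_lt_or_eq.1 hr with hr' | rfl
          · exact h2 r hr'
          · exact h4
    exact (key l le_rfl).2
  · rintro ⟨k, hk, rfl⟩
    have e : factorAt fibWord k l = factorAt fibWord m l :=
      List.map_congr_left fun r hr => hk r (List.mem_range.1 hr)
    have e' := congrArg phiW e
    rw [← factorAt_blockPos, ← factorAt_blockPos] at e'
    have hlen : blockPos (k + l) - blockPos k = blockPos (m + l) - blockPos m := by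
      simpa [factorAt] using congrArg List.length e'
    rw [hlen] at e'
    have hk' : blockPos k ≤ blockPos (k + l) := blockPos_strictMono.monotone (by omega)
    have hm' : blockPos m ≤ blockPos (m + l) := blockPos_strictMono.monotone (by omega)
    intro r hr
    rcases Nat.lt_succ_iff_lt_or_eq.1 hr with hr' | rfl
    · exact List.map_inj_left.1 e' r (List.mem_range.2 hr')
    · rw [Nat.add_sub_cancel' hm', ← hlen, Nat.add_sub_cancel' hk', fibWord_blockPos,
        fibWord_blockPos]

/-! ### The induction -/

lemma twoReturns_occ (e : ℕ) : ∀ i n, i + n = e → TwoReturns (occ i n) := by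
  induction e using Nat.strong_induction_on with
  | _ e ih =>
  -- factors beginning and ending with `a`; the end may exceed `e` by one
  have step1 : ∀ i n, i + n ≤ e → 0 < e → fibWord i = false → fibWord (i + n) = false →
      TwoReturns (occ i (n + 1)) := by
    intro i n hin he h1 h2
    obtain ⟨m, rfl⟩ := exists_blockPos h1
    obtain ⟨q, hq⟩ := exists_blockPos h2
    have hmq : m ≤ q := blockPos_strictMono.le_iff_le.1 (by omega)
    obtain ⟨l, rfl⟩ := Nat.exists_eq_add_of_le hmq
    obtain rfl : n = blockPos (m + l) - blockPos m := by omega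
    rw [occ_blockPos]
    refine (ih (m + l) ?_ m l rfl).image_blockPos
    rcases Nat.eq_zero_or_pos (m + l) with h | h
    · omega
    · have := lt_blockPos h
      omega
  -- factors beginning with `a`
  have step2 : ∀ i n, i + n + 1 = e → fibWord i = false → TwoReturns (occ i (n + 1)) := by
    intro i n hin h1
    cases h : fibWord (i + n)
    · exact step1 i n (by omega) (by omega) h1 h
    · rw [occ_succ_right h]
      exact step1 i (n + 1) (by omega) (by omega) h1 (fibWord_around_true h).2
  intro i n hin
  rcases n with _ | n
  · rw [occ_zero]; exact twoReturns_univ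
  cases h : fibWord i
  · exact step2 i n (by omega) h
  · obtain ⟨⟨k, rfl, hk⟩, -⟩ := fibWord_around_true h
    rw [occ_succ_left h]
    exact (step2 k (n + 1) (by omega) hk).image_succ fun j hj => (hj 0 (by omega)).trans hk

/-- every nonempty factor of the Fibonacci word has exactly two
return words. -/
theorem fibWord_two_return_words (w : List Bool) (hne : w ≠ [])
    (hw : IsFactor fibWord w) :
    ∃ v₁ v₂ : List Bool, v₁ ≠ v₂ ∧
      ∀ v : List Bool, IsReturnWord fibWord w v ↔ (v = v₁ ∨ v = v₂) := by
  obtain ⟨i, hi⟩ := hw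
  have hocc : ∀ k, OccursAt fibWord w k ↔ k ∈ occ i w.length := by
    intro k
    rw [OccursAt, ← hi]
    simp only [factorAt, List.length_map, List.length_range, List.map_inj_left, List.mem_range]
    rfl
  obtain ⟨v₁, v₂, h12, h⟩ := twoReturns_occ _ i w.length rfl
  refine ⟨v₁, v₂, h12, fun v => Iff.trans ?_ (h v)⟩
  simp only [IsReturnWord, IsReturnWordAt, IsReturn, hocc]
end

section
/- For every δ ≥ 1, the sequence v_δ is aperiodic (not eventually periodic), balanced, and uniformly recurrent (every factor of v_δ occurs infinitely often and the gaps between consecutive occurrences of each factor are bounded). -/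
/-! The number of letters `a` in the prefix of length `n` of the Fibonacci word is
`cntA n = ⌊(n+1)/τ⌋`. Indeed, since `τ⁻² = 1 - τ⁻¹`, this function satisfies the relations forced by
`f = φ(f)`, namely `cntA (n + cntA n) = n` and `cntA (n + cntA n + 1) = n + 1`, so its coding
`rotWord` has its prefixes mapped by `φ` to longer prefixes (`phiW_rotWord`) and equals `f`.
The letter `v_δ(i)` is thus determined by `cntA i`, `cntA (i + 1)` and `i`.

* Balance: each letter of `y_δ` fills one residue class (`yseq_class`), so windows of lengths `k` and
  at most `k + 1` in `y_δ` contain `≥ q` and `≤ q + 1` copies of it (`yseq_count`). A factor of `v_δ`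
  reads off windows of `y_δ` and `ŷ_δ`, whose lengths for two factors of equal length differ by at
  most one (`cntA_balanced`).
* Aperiodicity: an eventual period `p` would make `cntA` increase by a constant `c` over each period,
  forcing `p/τ = c`, which is irrational.
* Uniform recurrence: with `H = 2^(δ-1)`, a shift by `H * d` where `d/τ` exceeds an integer `e` by
  little adds `H * e` to the counts of `a` and `H * (d - e)` to the counts of `b` over a given window,
  so it preserves the colouring there (`vdelta_shift`). Such `d` have bounded gaps
  (`exists_return`), by approximation of `1/τ` from both sides with Fibonacci numbers. -/


open Filter

/-- A sequence is balanced: for every letter, the numbers of its occurrences in any two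
factors of the same length differ by at most 1. -/
def BalancedSeq {α : Type*} [DecidableEq α] (u : ℕ → α) : Prop :=
  ∀ (c : α) (w₁ w₂ : List α), IsFactor u w₁ → IsFactor u w₂ →
    w₁.length = w₂.length → w₁.count c ≤ w₂.count c + 1

/-- The constant gap sequence y_δ over {1,…,δ}: y_δ(i) = 1 if 2^(δ-1) ∣ i,
and y_δ(i) = δ - ν₂(i) otherwise (ν₂ = 2-adic valuation). -/
def yseq (δ : ℕ) (i : ℕ) : ℕ :=
  if 2 ^ (δ - 1) ∣ i then 1 else δ - padicValNat 2 i

/-- Number of occurrences of the letter `c` among `u 0, …, u (i-1)`. -/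
def countLetter (u : ℕ → Bool) (c : Bool) (i : ℕ) : ℕ :=
  (List.range i).countP fun k => u k == c

/-- The colouring v_δ of the Fibonacci word by y_δ and its hatted copy ŷ_δ:
`Sum.inl k` encodes the letter k ∈ {1,…,δ} and `Sum.inr k` the hatted letter k̂. -/
def vdelta (δ : ℕ) (i : ℕ) : ℕ ⊕ ℕ :=
  if fibWord i = false then Sum.inl (yseq δ (countLetter fibWord false i))
  else Sum.inr (yseq δ (countLetter fibWord true i))

/-- The discolouration map π sending each unhatted letter to a (= `false`) and each
hatted letter to b (= `true`); thus π(v_δ) = f letterwise. -/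
def piMap : ℕ ⊕ ℕ → Bool := Sum.elim (fun _ => false) (fun _ => true)

/-- A sequence is eventually periodic. -/
def EventuallyPeriodic {α : Type*} (u : ℕ → α) : Prop :=
  ∃ p : ℕ, 1 ≤ p ∧ ∃ n₀ : ℕ, ∀ n, n₀ ≤ n → u (n + p) = u n

/-- A sequence is uniformly recurrent: every factor occurs infinitely often, with
bounded gaps between consecutive occurrences. -/
def UniformlyRecurrent {α : Type*} (u : ℕ → α) : Prop :=
  ∀ w : List α, IsFactor u w → ∃ R : ℕ, ∀ i : ℕ, ∃ j, i ≤ j ∧ j ≤ i + R ∧ OccursAt u w j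

/-! ### The rotation form of the Fibonacci word -/

/-- The frequency `τ - 1 = 1/τ` of the letter `a` in the Fibonacci word. -/
noncomputable def freqA : ℝ := Real.goldenRatio - 1

lemma freqA_pos : 0 < freqA := by
  have := Real.one_lt_goldenRatio; unfold freqA; linarith

lemma freqA_lt_one : freqA < 1 := by
  have := Real.goldenRatio_lt_two; unfold freqA; linarith

lemma freqA_sq : freqA ^ 2 = 1 - freqA := by
  have := Real.goldenRatio_sq; unfold freqA; linear_combination this

lemma freqA_irrational : Irrational freqA := by
  have := Real.goldenRatio_irrational.sub_natCast 1
  simpa [freqA] using this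

/-- The closed form `⌊(n+1)/τ⌋` of the number of letters `a` in the prefix of length `n` of the
Fibonacci word. -/
noncomputable def cntA (n : ℕ) : ℕ := ⌊((n : ℝ) + 1) * freqA⌋₊

lemma cntA_le (n : ℕ) : (cntA n : ℝ) ≤ ((n : ℝ) + 1) * freqA :=
  Nat.floor_le (by have := freqA_pos; positivity)

lemma cntA_lt (n : ℕ) : (cntA n : ℝ) < ((n : ℝ) + 1) * freqA := by
  refine lt_of_le_of_ne (cntA_le n) fun h => ?_
  have h2 : Irrational (((n + 1 : ℕ) : ℝ) * freqA) := freqA_irrational.natCast_mul (by omega)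
  exact h2 ⟨(cntA n : ℚ), by push_cast; exact h⟩

lemma lt_cntA (n : ℕ) : ((n : ℝ) + 1) * freqA < cntA n + 1 := Nat.lt_floor_add_one _

lemma cntA_eq {n k : ℕ} (h1 : (k : ℝ) ≤ ((n : ℝ) + 1) * freqA)
    (h2 : ((n : ℝ) + 1) * freqA < k + 1) : cntA n = k :=
  (Nat.floor_eq_iff (by have := freqA_pos; positivity)).2 ⟨h1, h2⟩

lemma cntA_zero : cntA 0 = 0 :=
  cntA_eq (by have := freqA_pos; simpa using this.le) (by have := freqA_lt_one; simpa using this)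

lemma cntA_mono : Monotone cntA := fun m n h => by
  have : (m : ℝ) ≤ n := by exact_mod_cast h
  exact Nat.floor_le_floor (by have := freqA_pos; gcongr)

lemma cntA_succ (n : ℕ) : cntA (n + 1) = cntA n ∨ cntA (n + 1) = cntA n + 1 := by
  have h1 := cntA_mono (Nat.le_succ n)
  have h2 : (cntA (n + 1) : ℝ) < cntA n + 2 := by
    have a := cntA_lt (n + 1)
    have b := lt_cntA n
    have c := freqA_lt_one
    push_cast at a
    linarith
  have h3 : cntA (n + 1) < cntA n + 2 := by exact_mod_cast h2
  simp only [Nat.succ_eq_add_one] at h1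
  omega

lemma cntA_le_self (n : ℕ) : cntA n ≤ n := by
  induction n with
  | zero => simp [cntA_zero]
  | succ n ih => have := cntA_succ n; omega

/-- The prefix `φ(f₀⋯f_{n-1})` of length `n + cntA n` contains `n` letters `a`, one for each letter
of its preimage. With `θ` the fractional part of `(n+1)/τ`, the relevant product is
`n + 1 - θ/τ`. -/
lemma cntA_image (n : ℕ) : cntA (n + cntA n) = n := by
  have h1 := cntA_lt n
  have h2 := lt_cntA n
  have p := freqA_pos
  have q := freqA_lt_one
  have key : (((n + cntA n : ℕ) : ℝ) + 1) * freqA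
      = n + 1 - (((n : ℝ) + 1) * freqA - cntA n) * freqA := by
    push_cast; linear_combination ((n : ℝ) + 1) * freqA_sq
  apply cntA_eq <;> rw [key] <;> nlinarith

/-- Every block `φ(x)` begins with `a`. -/
lemma cntA_image_succ (n : ℕ) : cntA (n + cntA n + 1) = n + 1 := by
  have h1 := cntA_lt n
  have h2 := lt_cntA n
  have p := freqA_pos
  have q := freqA_lt_one
  have key : (((n + cntA n + 1 : ℕ) : ℝ) + 1) * freqA
      = n + 1 + (1 - (((n : ℝ) + 1) * freqA - cntA n)) * freqA := by
    push_cast; linear_combination ((n : ℝ) + 1) * freqA_sq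
  apply cntA_eq <;> rw [key] <;> push_cast <;> nlinarith

/-- The Sturmian coding whose letter is `b` (= `true`) exactly where `cntA` does not increase. -/
noncomputable def rotWord (n : ℕ) : Bool := decide (cntA (n + 1) = cntA n)

lemma phiW_rotWord (n : ℕ) :
    phiW ((List.range n).map rotWord) = (List.range (n + cntA n)).map rotWord := by
  induction n with
  | zero => simp [phiW, cntA_zero]
  | succ n ih =>
    have e : phiW ((List.range (n + 1)).map rotWord)
        = phiW ((List.range n).map rotWord) ++ phi (rotWord n) := by
      simp [phiW, List.range_succ]
    have h0 : rotWord (n + cntA n) = false := by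
      simp [rotWord, cntA_image, cntA_image_succ]
    rw [e, ih]
    rcases cntA_succ n with h | h
    · have hr : rotWord n = true := by simp [rotWord, h]
      rw [hr, h, show n + 1 + cntA n = (n + cntA n) + 1 by ring, List.range_succ]
      simp [phi, h0]
    · have hr : rotWord n = false := by simp [rotWord, h]
      have h1 : rotWord (n + cntA n + 1) = true := by
        have h3 := cntA_image (n + 1)
        rw [h, show n + 1 + (cntA n + 1) = n + cntA n + 1 + 1 by ring] at h3
        simp [rotWord, h3, cntA_image_succ]
      rw [hr, h, show n + 1 + (cntA n + 1) = n + cntA n + 1 + 1 by ring, List.range_succ,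
        List.range_succ]
      simp [phi, h0, h1]

lemma cntA_one : cntA 1 = 1 := by simpa [cntA_zero] using cntA_image_succ 0

lemma phiIter_eq (N : ℕ) : ∃ L, N + 1 ≤ L ∧ phiIter N = (List.range L).map rotWord := by
  induction N with
  | zero =>
    exact ⟨1, le_rfl, by simp [phiIter, rotWord, cntA_zero, cntA_one]⟩
  | succ N ih =>
    obtain ⟨L, hL, h⟩ := ih
    refine ⟨L + cntA L, ?_, ?_⟩
    · have := cntA_mono (show 1 ≤ L by omega)
      rw [cntA_one] at this
      omega
    · rw [← phiW_rotWord, ← h, phiIter, phiIter, Function.iterate_succ_apply']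

lemma fibWord_eq (i : ℕ) : fibWord i = rotWord i := by
  obtain ⟨L, hL, h⟩ := phiIter_eq (i + 1)
  have hi : i < L := by omega
  simp [fibWord, h, List.getD, hi]

lemma fibWord_false_iff (i : ℕ) : fibWord i = false ↔ cntA (i + 1) = cntA i + 1 := by
  rw [fibWord_eq]
  rcases cntA_succ i with h | h <;> simp [rotWord, h]

lemma countLetter_succ (u : ℕ → Bool) (c : Bool) (i : ℕ) :
    countLetter u c (i + 1) = countLetter u c i + if u i = c then 1 else 0 := by
  simp [countLetter, List.range_succ, List.countP_singleton]

lemma countLetter_false (i : ℕ) : countLetter fibWord false i = cntA i := by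
  induction i with
  | zero => simp [countLetter, cntA_zero]
  | succ i ih =>
    rw [countLetter_succ, ih]
    have h := fibWord_false_iff i
    have h2 := cntA_succ i
    split_ifs with hc
    · exact (h.1 hc).symm
    · rw [h] at hc; omega

lemma countLetter_true (i : ℕ) : countLetter fibWord true i = i - cntA i := by
  induction i with
  | zero => simp [countLetter]
  | succ i ih =>
    rw [countLetter_succ, ih]
    have h := fibWord_false_iff i
    have h2 := cntA_succ i
    have h3 := cntA_le_self i
    split_ifs with hc
    · rw [hc] at h; simp at h; omega
    · rw [Bool.not_eq_true] at hc; have := h.1 hc; omega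

lemma vdelta_eq (δ i : ℕ) : vdelta δ i =
    if cntA (i + 1) = cntA i + 1 then Sum.inl (yseq δ (cntA i))
    else Sum.inr (yseq δ (i - cntA i)) := by
  simp only [vdelta, countLetter_false, countLetter_true, fibWord_false_iff]

/-! ### Residue classes of the constant gap sequence -/

/-- A number not in the alphabet never occurs in `y_δ`; each letter occupies a single residue class, whose modulus divides `2^(δ-1)`. -/
lemma yseq_class (δ : ℕ) (hδ : 1 ≤ δ) (l : ℕ) : (∀ m, yseq δ m ≠ l) ∨
    ∃ M r, r < M ∧ M ∣ 2 ^ (δ - 1) ∧ ∀ m, yseq δ m = l ↔ m % M = r := by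
  -- outside the class of `0` the valuation is at most `δ - 2`
  have hv : ∀ m, ¬ 2 ^ (δ - 1) ∣ m → padicValNat 2 m + 2 ≤ δ := by
    intro m hm
    by_contra hc
    exact hm ((pow_dvd_pow 2 (by omega)).trans pow_padicValNat_dvd)
  rcases Nat.lt_or_ge l 2 with hl | hl
  · rcases Nat.lt_or_ge l 1 with hl0 | hl1
    · left
      intro m
      unfold yseq
      split_ifs with h
      · omega
      · have := hv m h; omega
    · right
      refine ⟨2 ^ (δ - 1), 0, by positivity, dvd_rfl, fun m => ?_⟩
      rw [← Nat.dvd_iff_mod_eq_zero]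
      unfold yseq
      split_ifs with h
      · simp only [h, iff_true]; omega
      · have := hv m h
        simp only [h, iff_false]; omega
  · rcases Nat.lt_or_ge δ l with hd | hd
    · left
      intro m
      unfold yseq
      split_ifs with h <;> omega
    · right
      set e := δ - l with he
      refine ⟨2 ^ (e + 1), 2 ^ e, Nat.pow_lt_pow_right (by norm_num) (by omega),
        pow_dvd_pow 2 (by omega), fun m => ?_⟩
      have key : m % 2 ^ (e + 1) = 2 ^ e ↔ (2 ^ e ∣ m ∧ ¬ 2 ^ (e + 1) ∣ m) := by
        constructor
        · intro h
          refine ⟨?_, ?_⟩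
          · rw [← Nat.mod_add_div m (2 ^ (e + 1)), h, pow_succ, mul_assoc]
            exact dvd_add dvd_rfl (dvd_mul_right _ _)
          · rw [Nat.dvd_iff_mod_eq_zero, h]; positivity
        · rintro ⟨⟨k, rfl⟩, h⟩
          rw [pow_succ, Nat.mul_mod_mul_left]
          rw [pow_succ] at h
          have : k % 2 ≠ 0 := fun h0 =>
            h (Nat.mul_dvd_mul_left _ (Nat.dvd_of_mod_eq_zero h0))
          rw [show k % 2 = 1 by omega, mul_one]
      rw [key]
      unfold yseq
      split_ifs with h
      · constructor
        · omega
        · rintro ⟨-, h2⟩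
          exact absurd ((pow_dvd_pow 2 (by omega)).trans h) h2
      · have hb := hv m h
        have hm : m ≠ 0 := by rintro rfl; simp at h
        rw [padicValNat_dvd_iff_le hm, padicValNat_dvd_iff_le hm]
        omega

lemma yseq_add_mul (δ : ℕ) (hδ : 1 ≤ δ) (m t : ℕ) :
    yseq δ (m + 2 ^ (δ - 1) * t) = yseq δ m := by
  rcases yseq_class δ hδ (yseq δ m) with h | ⟨M, r, -, ⟨c, hc⟩, h⟩
  · exact absurd rfl (h m)
  · rw [h, hc, mul_assoc, Nat.add_mul_mod_self_left]
    exact (h m).1 rfl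

lemma count_class {M r : ℕ} (hr : r < M) (p : ℕ → Prop) [DecidablePred p]
    (hp : ∀ m, p m ↔ m % M = r) (b : ℕ) : Nat.count p b = (b + (M - 1 - r)) / M := by
  induction b with
  | zero => rw [Nat.count_zero, Nat.div_eq_of_lt (by omega)]
  | succ b ih =>
    rw [Nat.count_succ, ih, show b + 1 + (M - 1 - r) = b + (M - 1 - r) + 1 by ring, Nat.succ_div]
    have : p b ↔ M ∣ b + (M - 1 - r) + 1 := by
      rw [hp, show b + (M - 1 - r) + 1 = b + (M - r) by omega]
      constructor
      · intro h
        have := Nat.mod_add_div b M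
        rw [h] at this
        exact ⟨b / M + 1, by rw [Nat.mul_add]; omega⟩
      · rintro ⟨k, hk⟩
        rcases k with _ | k
        · omega
        · rw [Nat.mul_add] at hk
          rw [show b = r + M * k by omega, Nat.add_mul_mod_self_left, Nat.mod_eq_of_lt hr]
    simp only [this]

/-- Windows of lengths `k` and at most `k + 1` contain numbers of occurrences of a letter of `y_δ`
differing by at most one in the relevant direction: with `k = qM + s`, `s < M`, the shorter window
has at least `q` and the longer one at most `q + 1`. -/
lemma yseq_count (δ : ℕ) (hδ : 1 ≤ δ) (l x x' y y' : ℕ) (hy : y ≤ y')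
    (h : x' + y ≤ y' + x + 1) :
    Nat.count (fun m => yseq δ m = l) x' + Nat.count (fun m => yseq δ m = l) y
      ≤ Nat.count (fun m => yseq δ m = l) y' + Nat.count (fun m => yseq δ m = l) x + 1 := by
  rcases yseq_class δ hδ l with h0 | ⟨M, r, hr, -, hM⟩
  · have : ∀ z, Nat.count (fun m => yseq δ m = l) z = 0 := by
      intro z; simp [h0]
    simp [this]
  · simp only [count_class hr _ hM]
    set c := M - 1 - r
    obtain ⟨k, rfl⟩ := Nat.exists_eq_add_of_le hy
    have hM0 : 0 < M := by omega
    have a1 : (x' + c) / M ≤ (x + c) / M + k / M + 1 := by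
      rw [← Nat.lt_succ_iff, Nat.div_lt_iff_lt_mul hM0]
      have e1 := Nat.mod_add_div (x + c) M
      have e2 := Nat.mod_add_div k M
      have l1 := Nat.mod_lt (x + c) hM0
      have l2 := Nat.mod_lt k hM0
      have : ((x + c) / M + k / M + 1).succ * M = M * ((x + c) / M) + M * (k / M) + 2 * M := by
        rw [Nat.succ_eq_add_one]; ring
      rw [this]; omega
    have a2 : (y + c) / M + k / M ≤ (y + k + c) / M := by
      rw [show y + k + c = (y + c) + k by ring]
      exact Nat.div_add_div_le_add_div
    omega

/-! ### Balance -/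

lemma count_factorAt {α : Type*} [DecidableEq α] (u : ℕ → α) (c : α) (i n : ℕ) :
    (factorAt u i n).count c + Nat.count (fun k => u k = c) i
      = Nat.count (fun k => u k = c) (i + n) := by
  induction n with
  | zero => simp [factorAt]
  | succ n ih =>
    rw [← Nat.add_assoc, Nat.count_succ, ← ih]
    simp only [factorAt, List.range_succ, List.map_append, List.count_append, List.map_cons,
      List.map_nil, List.count_singleton, beq_iff_eq]
    split_ifs <;> ring

lemma count_inl (δ l n : ℕ) : Nat.count (fun k => vdelta δ k = Sum.inl l) n
    = Nat.count (fun m => yseq δ m = l) (cntA n) := by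
  induction n with
  | zero => simp [cntA_zero]
  | succ n ih =>
    rw [Nat.count_succ, ih, vdelta_eq]
    rcases cntA_succ n with h | h
    · simp [h]
    · simp [h, Nat.count_succ]

lemma count_inr (δ l n : ℕ) : Nat.count (fun k => vdelta δ k = Sum.inr l) n
    = Nat.count (fun m => yseq δ m = l) (n - cntA n) := by
  induction n with
  | zero => simp
  | succ n ih =>
    rw [Nat.count_succ, ih, vdelta_eq]
    have := cntA_le_self n
    rcases cntA_succ n with h | h
    · rw [h, show n + 1 - cntA n = n - cntA n + 1 by omega, Nat.count_succ]; simp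
    · rw [h, show n + 1 - (cntA n + 1) = n - cntA n by omega]; simp

/-- The Fibonacci word is balanced: two windows of length `n` contain numbers of letters `a`
within distance less than one of `n/τ`. -/
lemma cntA_balanced (i j n : ℕ) : cntA (i + n) + cntA j ≤ cntA (j + n) + cntA i + 1 := by
  have h1 := cntA_lt (i + n)
  have h2 := lt_cntA (j + n)
  have h3 := cntA_lt j
  have h4 := lt_cntA i
  push_cast at h1 h2
  have : (cntA (i + n) : ℝ) + cntA j < cntA (j + n) + cntA i + 2 := by linarith
  have : cntA (i + n) + cntA j < cntA (j + n) + cntA i + 2 := by exact_mod_cast this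
  omega

lemma vdelta_balanced (δ : ℕ) (hδ : 1 ≤ δ) : BalancedSeq (vdelta δ) := by
  rintro c w₁ w₂ ⟨i, hi⟩ ⟨j, hj⟩ hlen
  unfold OccursAt at hi hj
  rw [← hlen] at hj
  rw [← hi, ← hj]
  set n := w₁.length
  simp only [factorAt]
  have hi' := count_factorAt (vdelta δ) c i n
  have hj' := count_factorAt (vdelta δ) c j n
  simp only [factorAt] at hi' hj'
  have b1 := cntA_balanced i j n
  have b2 := cntA_balanced j i n
  have m := cntA_mono (show j ≤ j + n by omega)
  rcases c with l | l
  · simp only [count_inl] at hi' hj'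
    have := yseq_count δ hδ l (cntA i) (cntA (i + n)) (cntA j) (cntA (j + n)) m b1
    omega
  · simp only [count_inr] at hi' hj'
    have c1 := cntA_le_self i
    have c2 := cntA_le_self j
    have c3 := cntA_le_self (i + n)
    have c4 := cntA_le_self (j + n)
    -- the window contains at most `n` letters `a`
    have c5 : ∀ k, cntA (j + k) ≤ cntA j + k := by
      intro k
      induction k with
      | zero => simp
      | succ k ih => have := cntA_succ (j + k); rw [← Nat.add_assoc]; omega
    have c6 := c5 n
    have := yseq_count δ hδ l (i - cntA i) (i + n - cntA (i + n)) (j - cntA j)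
      (j + n - cntA (j + n)) (by omega) (by omega)
    omega

/-! ### Aperiodicity -/

lemma vdelta_aperiodic (δ : ℕ) : ¬ EventuallyPeriodic (vdelta δ) := by
  rintro ⟨p, hp, n₀, h⟩
  have hinc : ∀ n, n₀ ≤ n → cntA (n + p + 1) + cntA n = cntA (n + 1) + cntA (n + p) := by
    intro n hn
    have h1 := h n hn
    rw [vdelta_eq, vdelta_eq] at h1
    have a := cntA_succ n
    have b := cntA_succ (n + p)
    split_ifs at h1 <;> omega
  set c := cntA (n₀ + p) - cntA n₀ with hc
  have hm := cntA_mono (show n₀ ≤ n₀ + p by omega)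
  have hper : ∀ k, cntA (n₀ + k + p) = cntA (n₀ + k) + c := by
    intro k
    induction k with
    | zero => simp; omega
    | succ k ih =>
      have := hinc (n₀ + k) (by omega)
      rw [show n₀ + (k + 1) + p = n₀ + k + p + 1 by ring, ← Nat.add_assoc]
      omega
  have hlin : ∀ k, cntA (n₀ + k * p) = cntA n₀ + k * c := by
    intro k
    induction k with
    | zero => simp
    | succ k ih =>
      rw [show n₀ + (k + 1) * p = n₀ + k * p + p by ring, hper, ih]; ring
  -- the increment `c` over a period would have to equal `p/τ`
  have hne : (p : ℝ) * freqA - c ≠ 0 := by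
    intro h0
    exact (freqA_irrational.natCast_mul (m := p) (by omega)) ⟨(c : ℚ), by push_cast; linarith⟩
  have hbound : ∀ k : ℕ, |(k : ℝ) * (p * freqA - c)| < 1 := by
    intro k
    have h1 := cntA_lt (n₀ + k * p)
    have h2 := lt_cntA (n₀ + k * p)
    have h3 := cntA_lt n₀
    have h4 := lt_cntA n₀
    rw [hlin] at h1 h2
    push_cast at h1 h2
    rw [abs_lt]
    constructor <;> nlinarith
  obtain ⟨k, hk⟩ := exists_nat_gt (1 / |(p : ℝ) * freqA - c|)
  have h1 := hbound k
  rw [abs_mul, Nat.abs_cast] at h1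
  rw [div_lt_iff₀ (abs_pos.2 hne)] at hk
  linarith

/-! ### Uniform recurrence -/

/-- Consecutive Fibonacci numbers approximate `1/τ` from either side with error `τ⁻ⁿ`. -/
lemma freqA_mul_fib (n : ℕ) :
    (Nat.fib (n + 1) : ℝ) * freqA - Nat.fib n = -(-freqA) ^ (n + 1) := by
  have hs : Real.goldenConj = -freqA := by
    have := Real.goldenRatio_add_goldenConj; unfold freqA; linarith
  have := Real.fib_succ_sub_goldenRatio_mul_fib (n + 1)
  rw [hs, Nat.fib_add_two] at this
  push_cast at this
  rw [← this]; unfold freqA; ring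

lemma exists_approx (ε : ℝ) (hε : 0 < ε) : ∃ p a q b : ℕ, 0 < p ∧ 0 < q ∧
    0 ≤ (p : ℝ) * freqA - a ∧ (p : ℝ) * freqA - a < ε ∧
    0 ≤ (b : ℝ) - q * freqA ∧ (b : ℝ) - q * freqA < ε := by
  have h0 := freqA_pos
  obtain ⟨N, hN⟩ := exists_pow_lt_of_lt_one hε freqA_lt_one
  have hle : ∀ m, N ≤ m → freqA ^ m < ε := fun m hm =>
    (pow_le_pow_of_le_one h0.le freqA_lt_one.le hm).trans_lt hN
  have e1 := freqA_mul_fib (2 * N)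
  have e2 := freqA_mul_fib (2 * N + 1)
  rw [Odd.neg_pow ⟨N, rfl⟩] at e1
  rw [Even.neg_pow ⟨N + 1, by ring⟩] at e2
  have l1 := hle (2 * N + 1) (by omega)
  have l2 := hle (2 * N + 1 + 1) (by omega)
  have p1 : 0 < freqA ^ (2 * N + 1) := by positivity
  have p2 : 0 < freqA ^ (2 * N + 1 + 1) := by positivity
  exact ⟨Nat.fib (2 * N + 1), Nat.fib (2 * N), Nat.fib (2 * N + 1 + 1), Nat.fib (2 * N + 1),
    Nat.fib_pos.2 (by omega), Nat.fib_pos.2 (by omega), by linarith, by linarith, by linarith,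
    by linarith⟩

/-- The return times `d` of the rotation by `1/τ` to `[0, ε)` have bounded gaps. A return can always
be followed by one of two steps, one moving right and one moving left by less than `ε/2`. -/
lemma exists_return (ε : ℝ) (hε : 0 < ε) : ∃ R : ℕ, ∀ N : ℕ, ∃ d e : ℕ, N ≤ d ∧ d ≤ N + R ∧
    0 ≤ (d : ℝ) * freqA - e ∧ (d : ℝ) * freqA - e < ε := by
  obtain ⟨p, a, q, b, hp, hq, h1, h2, h3, h4⟩ := exists_approx (ε / 2) (by linarith)
  refine ⟨p + q, fun N => ?_⟩
  induction N with
  | zero => exact ⟨0, 0, by simp, by simp, by simp, by simpa using hε⟩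
  | succ N ih =>
    obtain ⟨d, e, hd1, hd2, he1, he2⟩ := ih
    rcases Nat.lt_or_ge N d with hlt | hge
    · exact ⟨d, e, by omega, by omega, he1, he2⟩
    · rcases lt_or_ge ((d : ℝ) * freqA - e + (p * freqA - a)) ε with hs | hs
      · refine ⟨d + p, e + a, by omega, by omega, ?_, ?_⟩ <;> push_cast <;> linarith
      · refine ⟨d + q, e + b, by omega, by omega, ?_, ?_⟩ <;> push_cast <;> linarith

/-- The fractional parts of `(i+1)/τ, …, (i+n)/τ` stay away from `1`. -/
lemma exists_margin (i n : ℕ) : ∃ η : ℝ, 0 < η ∧ ∀ k < n,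
    ((i + k : ℕ) + 1 : ℝ) * freqA + η ≤ cntA (i + k) + 1 := by
  induction n with
  | zero => exact ⟨1, one_pos, by simp⟩
  | succ n ih =>
    obtain ⟨η, hη, h⟩ := ih
    have hn := lt_cntA (i + n)
    refine ⟨min η (cntA (i + n) + 1 - ((i + n : ℕ) + 1 : ℝ) * freqA),
      lt_min hη (by linarith), fun k hk => ?_⟩
    rcases Nat.lt_succ_iff_lt_or_eq.1 hk with hk | rfl
    · have := h k hk
      have := min_le_left η (cntA (i + n) + 1 - ((i + n : ℕ) + 1 : ℝ) * freqA)
      linarith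
    · have := min_le_right η (cntA (i + k) + 1 - ((i + k : ℕ) + 1 : ℝ) * freqA)
      linarith

/-- A shift by a multiple `H * d` of the period that nearly returns the rotation changes the counts
of both letters by multiples of `H`, and therefore preserves the colouring. -/
lemma vdelta_shift (δ : ℕ) (hδ : 1 ≤ δ) (i n : ℕ) : ∃ ε : ℝ, 0 < ε ∧ ∀ d e : ℕ,
    0 ≤ (d : ℝ) * freqA - e → (d : ℝ) * freqA - e < ε → ∀ k < n,
      vdelta δ (i + 2 ^ (δ - 1) * d + k) = vdelta δ (i + k) := by
  obtain ⟨η, hη, hm⟩ := exists_margin i (n + 1)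
  set H := 2 ^ (δ - 1) with hH
  have hH0 : (0 : ℝ) < H := by rw [hH]; positivity
  refine ⟨η / H, by positivity, fun d e h1 h2 k hk => ?_⟩
  rw [lt_div_iff₀ hH0] at h2
  have hA : ∀ k < n + 1, cntA (i + H * d + k) = cntA (i + k) + H * e := by
    intro k hk
    have a1 := hm k hk
    have a2 := cntA_le (i + k)
    have a3 : 0 ≤ ((d : ℝ) * freqA - e) * H := by positivity
    push_cast at a1 a2
    apply cntA_eq <;> push_cast <;> nlinarith
  have hed : e ≤ d := by
    have : (e : ℝ) ≤ d := by
      have := freqA_lt_one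
      nlinarith [(Nat.cast_nonneg d : (0 : ℝ) ≤ d)]
    exact_mod_cast this
  obtain ⟨t, rfl⟩ := Nat.exists_eq_add_of_le hed
  have b1 := hA k (by omega)
  have b2 := hA (k + 1) (by omega)
  simp only [← Nat.add_assoc] at b1 b2 ⊢
  have hle := cntA_le_self (i + k)
  have hB : i + H * (e + t) + k - cntA (i + H * (e + t) + k) = (i + k - cntA (i + k)) + H * t := by
    rw [b1, Nat.mul_add]; omega
  rw [vdelta_eq, vdelta_eq, hB, b1, b2, yseq_add_mul δ hδ, yseq_add_mul δ hδ]
  have : cntA (i + k + 1) + H * e = cntA (i + k) + H * e + 1 ↔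
      cntA (i + k + 1) = cntA (i + k) + 1 := by omega
  simp only [this]

lemma vdelta_uniformlyRecurrent (δ : ℕ) (hδ : 1 ≤ δ) : UniformlyRecurrent (vdelta δ) := by
  rintro w ⟨i, hi⟩
  obtain ⟨ε, hε, hs⟩ := vdelta_shift δ hδ i w.length
  obtain ⟨R, hR⟩ := exists_return ε hε
  have hH0 : 1 ≤ 2 ^ (δ - 1) := Nat.one_le_two_pow
  set H := 2 ^ (δ - 1) with hH
  refine ⟨i + H * (R + 1), fun i₀ => ?_⟩
  -- `H * (⌊i₀ / H⌋ + 1)` is the first multiple of `H` past `i₀`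
  obtain ⟨d, e, hd1, hd2, he1, he2⟩ := hR (i₀ / H + 1)
  refine ⟨i + H * d, ?_, ?_, ?_⟩
  · have := Nat.lt_mul_div_succ i₀ (show 0 < H by omega)
    have := Nat.mul_le_mul_left H hd1
    omega
  · have h1 := Nat.mul_le_mul_left H hd2
    have h2 := Nat.mul_div_le i₀ H
    have h3 : H * (i₀ / H + 1 + R) = H * (i₀ / H) + H * (R + 1) := by ring
    omega
  · have h1 : factorAt (vdelta δ) (i + H * d) w.length = factorAt (vdelta δ) i w.length := by
      refine List.map_congr_left fun k hk => hs d e he1 he2 k (List.mem_range.1 hk)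
    unfold OccursAt at hi ⊢
    rw [h1, hi]

/-- for every δ ≥ 1, the colouring v_δ of the Fibonacci word is
aperiodic, balanced and uniformly recurrent. -/
theorem vdelta_aperiodic_balanced_uniformlyRecurrent (δ : ℕ) (hδ : 1 ≤ δ) :
    ¬ EventuallyPeriodic (vdelta δ) ∧ BalancedSeq (vdelta δ) ∧
      UniformlyRecurrent (vdelta δ) := by
  exact ⟨vdelta_aperiodic δ, vdelta_balanced δ hδ, vdelta_uniformlyRecurrent δ hδ⟩
end
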